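/- arXiv:1411.6354 — 2 statements merged into one kernel-verified Lean document; each statement's English description precedes it below -/
import Mathlib

section
/- Let w be a bounded weight structure on a triangulated category C. Then C_{w≤0} equals the extension-closure in C of the union ∪_{i≤0} C_{w=i}, and C_{w≥0} equals the extension-closure in C of the union ∪_{i≥0} C_{w=i}. -/
/-!
In a weight structure the two classes determine each other by orthogonality:
`X ∈ C_{w≤i}` if and only if every morphism from `X` to an object of `C_{w≥i+1}` vanishes, and
dually (`le_iff`, `ge_iff`). Indeed, if `X` has this property and `A → X → B → A[1]` is a weight
decomposition of `X`, then `X → B` is zero, so that `X` is a retract of `A`. Classes defined by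
orthogonality are extension-closed, which gives the inclusions of the extension-closures in
`C_{w≤0}` and `C_{w≥0}`.

Conversely, let `X ∈ C_{w≤b} ∩ C_{w≥a}` with `a ≤ b`. Then `X` is an iterated extension of objects
of `C_{w=i}` with `a ≤ i ≤ b` (`extClosure_of_mem`), by induction on `b`. If `X ∈ C_{w≤b+1}`, take
a triangle `A → X → B → A[1]` with `A ∈ C_{w≤b}` and `B ∈ C_{w≥b+1}`. The rotated triangle
`X → B → A[1]` shows `B ∈ C_{w=b+1}`, and `B[-1] → A → X` shows `A ∈ C_{w≥a}`, so induction
applies to `A`. Boundedness puts every object of `C_{w≤0}` or `C_{w≥0}` in such an intersection,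
so this statement yields both halves. The octahedral axiom is not needed.
-/

open CategoryTheory CategoryTheory.Limits CategoryTheory.Pretriangulated

namespace CWH

/-- `X` is a retract of `Y`. -/
def IsRetract {C : Type*} [Category C] (X Y : C) : Prop :=
  ∃ (i : X ⟶ Y) (r : Y ⟶ X), i ≫ r = 𝟙 X

/-- The Karoubi-closure of a class of objects: all retracts of its objects. -/
def retractClosure {C : Type*} [Category C] (S : Set C) : Set C :=
  {X : C | ∃ Y ∈ S, IsRetract X Y}

variable (C : Type*) [Category C] [HasZeroObject C] [HasShift C ℤ]
  [Preadditive C] [∀ n : ℤ, (shiftFunctor C n).Additive] [Pretriangulated C]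

/-- A weight structure on a (pre)triangulated category (homological convention):
a pair of retract-closed classes `LE = C_{w≤0}` and `GE = C_{w≥0}` such that
`C_{w≤0} ⊆ C_{w≤0}[1]`, `C_{w≥0}[1] ⊆ C_{w≥0}`, `Hom(C_{w≤0}, C_{w≥0}[1]) = 0`,
and every object admits a weight decomposition. -/
structure WeightStructure where
  LE : Set C
  GE : Set C
  retract_LE : ∀ ⦃X Y : C⦄, IsRetract X Y → Y ∈ LE → X ∈ LE
  retract_GE : ∀ ⦃X Y : C⦄, IsRetract X Y → Y ∈ GE → X ∈ GE
  shift_LE : ∀ ⦃X : C⦄, X ∈ LE → X⟦(-1 : ℤ)⟧ ∈ LE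
  shift_GE : ∀ ⦃X : C⦄, X ∈ GE → X⟦(1 : ℤ)⟧ ∈ GE
  orthogonal : ∀ ⦃X Y : C⦄, X ∈ LE → Y ∈ GE → ∀ f : X ⟶ Y⟦(1 : ℤ)⟧, f = 0
  decomp : ∀ M : C, ∃ (X Y : C) (f : X ⟶ M) (g : M ⟶ Y) (h : Y ⟶ X⟦(1 : ℤ)⟧),
    Triangle.mk f g h ∈ (distTriang C) ∧ X ∈ LE ∧ Y⟦(-1 : ℤ)⟧ ∈ GE

variable {C}

namespace WeightStructure

variable (w : WeightStructure C)

/-- `C_{w≤i} = C_{w≤0}[i]`. -/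
def le (i : ℤ) : Set C := {X : C | X⟦(-i)⟧ ∈ w.LE}

/-- `C_{w≥i} = C_{w≥0}[i]`. -/
def ge (i : ℤ) : Set C := {X : C | X⟦(-i)⟧ ∈ w.GE}

/-- `C_{w=i} = C_{w≤i} ∩ C_{w≥i}`. -/
def eqw (i : ℤ) : Set C := w.le i ∩ w.ge i

/-- `w` is bounded if every object lies in some `C_{w≤i}` and in some `C_{w≥i}`. -/
def IsBounded : Prop := ∀ X : C, (∃ i : ℤ, X ∈ w.le i) ∧ (∃ i : ℤ, X ∈ w.ge i)

end WeightStructure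

/-- The extension-closure of a class `S` of objects: the smallest class containing
the zero objects and `S` and closed under extensions (distinguished triangles). -/
inductive ExtClosure (S : Set C) : C → Prop
  | zero (X : C) : IsZero X → ExtClosure S X
  | of (X : C) : X ∈ S → ExtClosure S X
  | ext {A E B : C} (f : A ⟶ E) (g : E ⟶ B) (h : B ⟶ A⟦(1 : ℤ)⟧) :
      Triangle.mk f g h ∈ (distTriang C) → ExtClosure S A → ExtClosure S B → ExtClosure S E

/-- The smallest full Karoubi-closed (strict) triangulated subcategory containing `S`:
closure under zero objects, shifts, cones and retracts. -/
inductive TriangClosure (S : Set C) : C → Prop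
  | of (X : C) : X ∈ S → TriangClosure S X
  | zero (X : C) : IsZero X → TriangClosure S X
  | shift (X : C) (n : ℤ) : TriangClosure S X → TriangClosure S (X⟦n⟧)
  | ext {X Y Z : C} (f : X ⟶ Y) (g : Y ⟶ Z) (h : Z ⟶ X⟦(1 : ℤ)⟧) :
      Triangle.mk f g h ∈ (distTriang C) → TriangClosure S X → TriangClosure S Y →
      TriangClosure S Z
  | retract (X Y : C) : IsRetract X Y → TriangClosure S Y → TriangClosure S X

/-- A (strict) full triangulated subcategory, given by its class of objects:
it contains the zero objects and is closed under shifts and under the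
two-out-of-three property for distinguished triangles. -/
structure IsTriangulatedSub (P : Set C) : Prop where
  zero : ∀ X : C, IsZero X → X ∈ P
  shift : ∀ X ∈ P, ∀ n : ℤ, X⟦n⟧ ∈ P
  ext₂ : ∀ ⦃X Y Z : C⦄ (f : X ⟶ Y) (g : Y ⟶ Z) (h : Z ⟶ X⟦(1 : ℤ)⟧),
    Triangle.mk f g h ∈ (distTriang C) → X ∈ P → Z ∈ P → Y ∈ P
  ext₃ : ∀ ⦃X Y Z : C⦄ (f : X ⟶ Y) (g : Y ⟶ Z) (h : Z ⟶ X⟦(1 : ℤ)⟧),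
    Triangle.mk f g h ∈ (distTriang C) → X ∈ P → Y ∈ P → Z ∈ P
  ext₁ : ∀ ⦃X Y Z : C⦄ (f : X ⟶ Y) (g : Y ⟶ Z) (h : Z ⟶ X⟦(1 : ℤ)⟧),
    Triangle.mk f g h ∈ (distTriang C) → Y ∈ P → Z ∈ P → X ∈ P

/-- A weight structure on the full (triangulated) subcategory of `C` whose objects
are given by the class `P`; retracts are taken inside `P` and the distinguished
triangles of the subcategory are the distinguished triangles of `C` with vertices
in `P`. -/
structure IsWeightStructureOn (P LEs GEs : Set C) : Prop where
  le_sub : LEs ⊆ P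
  ge_sub : GEs ⊆ P
  retract_le : ∀ ⦃X Y : C⦄, X ∈ P → IsRetract X Y → Y ∈ LEs → X ∈ LEs
  retract_ge : ∀ ⦃X Y : C⦄, X ∈ P → IsRetract X Y → Y ∈ GEs → X ∈ GEs
  shift_le : ∀ ⦃X : C⦄, X ∈ LEs → X⟦(-1 : ℤ)⟧ ∈ LEs
  shift_ge : ∀ ⦃X : C⦄, X ∈ GEs → X⟦(1 : ℤ)⟧ ∈ GEs
  orthogonal : ∀ ⦃X Y : C⦄, X ∈ LEs → Y ∈ GEs → ∀ f : X ⟶ Y⟦(1 : ℤ)⟧, f = 0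
  decomp : ∀ M ∈ P, ∃ (X Y : C) (f : X ⟶ M) (g : M ⟶ Y) (h : Y ⟶ X⟦(1 : ℤ)⟧),
    Triangle.mk f g h ∈ (distTriang C) ∧ X ∈ LEs ∧ Y⟦(-1 : ℤ)⟧ ∈ GEs

/-- The class of morphisms of `C` whose cone lies in `P`; the Verdier quotient
`C/P` is the localization of `C` at this class. -/
def coneIn (P : Set C) : MorphismProperty C := fun X Y f =>
  ∃ (Z : C) (g : Y ⟶ Z) (h : Z ⟶ X⟦(1 : ℤ)⟧),
    Triangle.mk f g h ∈ (distTriang C) ∧ Z ∈ P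

/-- A weight Postnikov tower for `M`: choices of weight truncations `trunc l = w_{≤l}M`
(with cones `conePt l = w_{≥l+1}M`), of the connecting morphisms between them that are
compatible with `𝟙 M`, and of the distinguished triangles
`w_{≤l}M → w_{≤l+1}M → M^{-l-1}[l+1] → (w_{≤l}M)[1]`; the objects `termAt l = M^{-l}`
lie in the heart and are the terms of the associated weight complex `t(M)`, whose
boundary morphisms `bd (l+1) l : M^{-l-1} → M^{-l}` are obtained by composing the
connecting morphisms of two consecutive triangles. -/
structure WeightPostnikovTower (w : WeightStructure C) (M : C) where
  trunc : ℤ → C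
  trunc_mem : ∀ l : ℤ, trunc l ∈ w.le l
  ι : ∀ l : ℤ, trunc l ⟶ M
  conePt : ℤ → C
  cone_mem : ∀ l : ℤ, conePt l ∈ w.ge (l + 1)
  coneπ : ∀ l : ℤ, M ⟶ conePt l
  coneδ : ∀ l : ℤ, conePt l ⟶ (trunc l)⟦(1 : ℤ)⟧
  trunc_dist : ∀ l : ℤ, Triangle.mk (ι l) (coneπ l) (coneδ l) ∈ (distTriang C)
  step : ∀ l : ℤ, trunc l ⟶ trunc (l + 1)
  step_ι : ∀ l : ℤ, step l ≫ ι (l + 1) = ι l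
  termAt : ℤ → C
  term_mem : ∀ l : ℤ, termAt l ∈ w.LE ∧ termAt l ∈ w.GE
  sπ : ∀ l : ℤ, trunc l ⟶ (termAt l)⟦l⟧
  sδ : ∀ l : ℤ, (termAt (l + 1))⟦(l + 1 : ℤ)⟧ ⟶ (trunc l)⟦(1 : ℤ)⟧
  step_dist : ∀ l : ℤ, Triangle.mk (step l) (sπ (l + 1)) (sδ l) ∈ (distTriang C)
  bd : ∀ i j : ℤ, termAt i ⟶ termAt j
  bd_shape : ∀ i j : ℤ, j + 1 ≠ i → bd i j = 0
  bd_eq : ∀ l : ℤ,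
    (shiftFunctor C (l + 1)).map (bd (l + 1) l) ≫
      (shiftFunctorAdd' C l 1 (l + 1) rfl).hom.app (termAt l) =
    sδ l ≫ (shiftFunctor C (1 : ℤ)).map (sπ l)

/-- The differential of the weight complex associated to a weight Postnikov tower,
in "homological" indexing: the `l`-th term `termAt l` is the `(-l)`-th term `M^{-l}`
of the weight complex. -/
def towerD {w : WeightStructure C} {M : C} (T : WeightPostnikovTower w M) :
    ∀ l : ℤ, T.termAt (l + 1) ⟶ T.termAt l :=
  fun l => T.bd (l + 1) l

section Complexes

variable {X Y : ℤ → C}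

/-- A morphism of ("homologically indexed") complexes. -/
def IsChainMapDown (X Y : ℤ → C) (dX : ∀ l : ℤ, X (l + 1) ⟶ X l)
    (dY : ∀ l : ℤ, Y (l + 1) ⟶ Y l) (f : ∀ l : ℤ, X l ⟶ Y l) : Prop :=
  ∀ l : ℤ, f (l + 1) ≫ dY l = dX l ≫ f l

/-- Two families of morphisms of complexes are chain homotopic. -/
def ChainHomotopicDown (X Y : ℤ → C) (dX : ∀ l : ℤ, X (l + 1) ⟶ X l)
    (dY : ∀ l : ℤ, Y (l + 1) ⟶ Y l) (f g : ∀ l : ℤ, X l ⟶ Y l) : Prop :=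
  ∃ s : ∀ l : ℤ, X l ⟶ Y (l + 1),
    ∀ l : ℤ, f (l + 1) - g (l + 1) = s (l + 1) ≫ dY (l + 1) + dX l ≫ s l

/-- Two complexes are homotopy equivalent (i.e., isomorphic in the homotopy category). -/
def HomotopyEquivDown (X Y : ℤ → C) (dX : ∀ l : ℤ, X (l + 1) ⟶ X l)
    (dY : ∀ l : ℤ, Y (l + 1) ⟶ Y l) : Prop :=
  ∃ (f : ∀ l : ℤ, X l ⟶ Y l) (g : ∀ l : ℤ, Y l ⟶ X l),
    IsChainMapDown X Y dX dY f ∧ IsChainMapDown Y X dY dX g ∧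
    ChainHomotopicDown X X dX dX (fun l => f l ≫ g l) (fun l => 𝟙 (X l)) ∧
    ChainHomotopicDown Y Y dY dY (fun l => g l ≫ f l) (fun l => 𝟙 (Y l))

end Complexes


namespace WeightStructure

variable (w : WeightStructure C)

lemma LE_of_iso {X Y : C} (e : X ≅ Y) (h : Y ∈ w.LE) : X ∈ w.LE :=
  w.retract_LE ⟨e.hom, e.inv, e.hom_inv_id⟩ h

lemma GE_of_iso {X Y : C} (e : X ≅ Y) (h : Y ∈ w.GE) : X ∈ w.GE :=
  w.retract_GE ⟨e.hom, e.inv, e.hom_inv_id⟩ h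

lemma mem_le_zero {X : C} : X ∈ w.le 0 ↔ X ∈ w.LE := by
  let e : X⟦(-0 : ℤ)⟧ ≅ X := (shiftFunctorZero' C (-0 : ℤ) (by simp)).app X
  exact ⟨w.LE_of_iso e.symm, w.LE_of_iso e⟩

lemma mem_ge_zero {X : C} : X ∈ w.ge 0 ↔ X ∈ w.GE := by
  let e : X⟦(-0 : ℤ)⟧ ≅ X := (shiftFunctorZero' C (-0 : ℤ) (by simp)).app X
  exact ⟨w.GE_of_iso e.symm, w.GE_of_iso e⟩

lemma retract_le {X Y : C} {i : ℤ} (h : IsRetract X Y) (hY : Y ∈ w.le i) : X ∈ w.le i := by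
  obtain ⟨s, r, hsr⟩ := h
  exact w.retract_LE ⟨(shiftFunctor C (-i)).map s, (shiftFunctor C (-i)).map r,
    by rw [← Functor.map_comp, hsr, CategoryTheory.Functor.map_id]⟩ hY

lemma retract_ge {X Y : C} {i : ℤ} (h : IsRetract X Y) (hY : Y ∈ w.ge i) : X ∈ w.ge i := by
  obtain ⟨s, r, hsr⟩ := h
  exact w.retract_GE ⟨(shiftFunctor C (-i)).map s, (shiftFunctor C (-i)).map r,
    by rw [← Functor.map_comp, hsr, CategoryTheory.Functor.map_id]⟩ hY

lemma shift_mem_le {X : C} {i : ℤ} (k j : ℤ) (hj : i + k = j) (h : X ∈ w.le i) :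
    X⟦k⟧ ∈ w.le j :=
  w.LE_of_iso ((shiftFunctorAdd' C k (-j) (-i) (by lia)).symm.app X) h

lemma shift_mem_ge {X : C} {i : ℤ} (k j : ℤ) (hj : i + k = j) (h : X ∈ w.ge i) :
    X⟦k⟧ ∈ w.ge j :=
  w.GE_of_iso ((shiftFunctorAdd' C k (-j) (-i) (by lia)).symm.app X) h

lemma le_mono {i j : ℤ} (hij : i ≤ j) : w.le i ⊆ w.le j := by
  intro X hX
  induction j, hij using Int.leInduction with
  | base => exact hX
  | succ j _ ih =>
    exact w.LE_of_iso ((shiftFunctorAdd' C (-j) (-1) (-(j + 1)) (by lia)).app X) (w.shift_LE ih)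

lemma ge_anti {i j : ℤ} (hij : i ≤ j) : w.ge j ⊆ w.ge i := by
  induction j, hij using Int.leInduction with
  | base => exact subset_rfl
  | succ j _ ih =>
    intro X hX
    exact ih (w.GE_of_iso ((shiftFunctorAdd' C (-(j + 1)) 1 (-j) (by lia)).app X)
      (w.shift_GE hX))

lemma hom_eq_zero {X Y : C} {i : ℤ} (hX : X ∈ w.le i) (hY : Y ∈ w.ge (i + 1)) (f : X ⟶ Y) :
    f = 0 := by
  let e := (shiftFunctorAdd' C (-(i + 1)) 1 (-i) (by lia)).app Y
  have h0 : f⟦-i⟧' ≫ e.hom = 0 := w.orthogonal hX hY _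
  have h1 : f⟦-i⟧' = 0 := by
    rw [← cancel_mono e.hom, h0, zero_comp]
  exact (shiftFunctor C (-i)).map_injective (by rw [h1, Functor.map_zero])

/-- Weight decompositions at an arbitrary level `i`, obtained by shifting a decomposition
of `M⟦-i⟧`. -/
lemma exists_decomp (M : C) (i : ℤ) :
    ∃ T ∈ (distTriang C), T.obj₂ = M ∧ T.obj₁ ∈ w.le i ∧ T.obj₃ ∈ w.ge (i + 1) := by
  obtain ⟨X, Y, f, g, h, hT, hX, hY⟩ := w.decomp (M⟦-i⟧)
  let T := (shiftFunctor (Triangle C) i).obj (Triangle.mk f g h)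
  let e : T.obj₂ ≅ M := (shiftFunctorCompIsoId C (-i) i (by lia)).app M
  have hTi : T ∈ distTriang C := Triangle.shift_distinguished _ hT i
  have h₁ : (T.mor₁ ≫ e.hom) ≫ e.inv = 𝟙 T.obj₁ ≫ T.mor₁ := by simp
  have h₂ : (e.inv ≫ T.mor₂) ≫ 𝟙 T.obj₃ = e.inv ≫ T.mor₂ := by simp
  have h₃ : T.mor₃ ≫ (𝟙 T.obj₁)⟦(1 : ℤ)⟧' = 𝟙 T.obj₃ ≫ T.mor₃ := by simp
  refine ⟨Triangle.mk (T.mor₁ ≫ e.hom) (e.inv ≫ T.mor₂) T.mor₃,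
    isomorphic_distinguished _ hTi _ (Triangle.isoMk _ _ (Iso.refl T.obj₁) e.symm
      (Iso.refl T.obj₃) h₁ h₂ h₃), rfl, ?_, ?_⟩
  · exact w.shift_mem_le i i (by lia) (w.mem_le_zero.2 hX)
  · exact w.shift_mem_ge (i := 1) i (i + 1) (by lia) hY

lemma le_iff {X : C} {i : ℤ} :
    X ∈ w.le i ↔ ∀ Y ∈ w.ge (i + 1), ∀ f : X ⟶ Y, f = 0 := by
  refine ⟨fun hX Y hY f => w.hom_eq_zero hX hY f, fun h => ?_⟩
  obtain ⟨T, hT, rfl, h₁, h₃⟩ := w.exists_decomp X i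
  obtain ⟨s, hs⟩ := Triangle.coyoneda_exact₂ T hT (𝟙 _)
    (by rw [h _ h₃ T.mor₂, comp_zero])
  exact w.retract_le ⟨s, T.mor₁, hs.symm⟩ h₁

lemma ge_iff {Y : C} {i : ℤ} :
    Y ∈ w.ge (i + 1) ↔ ∀ X ∈ w.le i, ∀ f : X ⟶ Y, f = 0 := by
  refine ⟨fun hY X hX f => w.hom_eq_zero hX hY f, fun h => ?_⟩
  obtain ⟨T, hT, rfl, h₁, h₃⟩ := w.exists_decomp Y i
  obtain ⟨r, hr⟩ := Triangle.yoneda_exact₂ T hT (𝟙 _)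
    (by rw [h _ h₁ T.mor₁, zero_comp])
  exact w.retract_ge ⟨T.mor₂, r, hr.symm⟩ h₃

lemma le_ext {i : ℤ} {T : Triangle C} (hT : T ∈ distTriang C) (h₁ : T.obj₁ ∈ w.le i)
    (h₃ : T.obj₃ ∈ w.le i) : T.obj₂ ∈ w.le i := by
  refine w.le_iff.2 fun Y hY f => ?_
  obtain ⟨g, rfl⟩ := Triangle.yoneda_exact₂ T hT f (w.hom_eq_zero h₁ hY _)
  rw [w.hom_eq_zero h₃ hY g, comp_zero]

lemma ge_ext {i : ℤ} {T : Triangle C} (hT : T ∈ distTriang C) (h₁ : T.obj₁ ∈ w.ge i)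
    (h₃ : T.obj₃ ∈ w.ge i) : T.obj₂ ∈ w.ge i := by
  obtain ⟨i, rfl⟩ : ∃ j, i = j + 1 := ⟨i - 1, by lia⟩
  refine w.ge_iff.2 fun X hX f => ?_
  obtain ⟨g, rfl⟩ := Triangle.coyoneda_exact₂ T hT f (w.hom_eq_zero hX h₃ _)
  rw [w.hom_eq_zero hX h₁ g, zero_comp]

lemma le_of_extClosure {S : Set C} {i : ℤ} (hS : S ⊆ w.le i) {X : C} (h : ExtClosure S X) :
    X ∈ w.le i := by
  induction h with
  | zero X hX => exact w.le_iff.2 fun Y _ f => hX.eq_of_src _ _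
  | of X hX => exact hS hX
  | ext f g h hT _ _ hA hB => exact w.le_ext hT hA hB

lemma ge_of_extClosure {S : Set C} {i : ℤ} (hS : S ⊆ w.ge i) {X : C} (h : ExtClosure S X) :
    X ∈ w.ge i := by
  induction h with
  | zero X hX =>
    obtain ⟨i, rfl⟩ : ∃ j, i = j + 1 := ⟨i - 1, by lia⟩
    exact w.ge_iff.2 fun Y _ f => hX.eq_of_tgt _ _
  | of X hX => exact hS hX
  | ext f g h hT _ _ hA hB => exact w.ge_ext hT hA hB

/-- An object with weights in `[a, b]` is an iterated extension of objects that are pure of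
weight `i` for `a ≤ i ≤ b`. -/
lemma extClosure_of_mem {a b : ℤ} (hab : a ≤ b) (S : Set C)
    (hS : ∀ i, a ≤ i → i ≤ b → w.eqw i ⊆ S) {X : C} (hle : X ∈ w.le b) (hge : X ∈ w.ge a) :
    ExtClosure S X := by
  induction b, hab using Int.leInduction generalizing X with
  | base => exact .of _ (hS a le_rfl le_rfl ⟨hle, hge⟩)
  | succ b hab ih =>
    obtain ⟨T, hT, rfl, h₁, h₃⟩ := w.exists_decomp X b
    have hB : T.obj₃ ∈ w.le (b + 1) :=
      w.le_ext (rot_of_distTriang _ hT) hle (w.shift_mem_le 1 (b + 1) rfl h₁)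
    have hA : T.obj₁ ∈ w.ge a :=
      w.ge_ext (inv_rot_of_distTriang _ hT)
        (w.ge_anti hab (w.shift_mem_ge (-1) b (by lia) h₃)) hge
    exact .ext T.mor₁ T.mor₂ T.mor₃ hT
      (ih (fun i h h' => hS i h (by lia)) h₁ hA)
      (.of _ (hS (b + 1) (by lia) le_rfl ⟨hB, h₃⟩))

end WeightStructure

/-- for a bounded weight structure, `C_{w≤0}` is the extension-closure of
`∪_{i≤0} C_{w=i}` and `C_{w≥0}` is the extension-closure of `∪_{i≥0} C_{w=i}`. -/
theorem statement2 (w : WeightStructure C) (hw : w.IsBounded) :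
    w.LE = {X : C | ExtClosure {Y : C | ∃ i : ℤ, i ≤ 0 ∧ Y ∈ w.eqw i} X} ∧
    w.GE = {X : C | ExtClosure {Y : C | ∃ i : ℤ, 0 ≤ i ∧ Y ∈ w.eqw i} X} := by
  constructor
  · ext X
    constructor
    · intro hX
      obtain ⟨a, ha⟩ := (hw X).2
      refine w.extClosure_of_mem (min_le_right a 0) _ ?_
        (w.mem_le_zero.2 hX) (w.ge_anti (min_le_left a 0) ha)
      exact fun i _ h Y hY => ⟨i, h, hY⟩
    · intro hX
      refine w.mem_le_zero.1 (w.le_of_extClosure ?_ hX)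
      rintro Y ⟨i, hi, hY⟩
      exact w.le_mono hi hY.1
  · ext X
    constructor
    · intro hX
      obtain ⟨b, hb⟩ := (hw X).1
      refine w.extClosure_of_mem (le_max_right b 0) _ ?_
        (w.le_mono (le_max_left b 0) hb) (w.mem_ge_zero.2 hX)
      exact fun i h _ Y hY => ⟨i, h, hY⟩
    · intro hX
      refine w.mem_ge_zero.1 (w.ge_of_extClosure ?_ hX)
      rintro Y ⟨i, hi, hY⟩
      exact w.ge_anti hi hY.2

end CWH
end

section
/- Let w be a weight structure on a triangulated category C. Then C_{w≥0} = (C_{w≤−1})^⊥ and C_{w≤0} = ^⊥(C_{w≥1}); that is: an object Y belongs to C_{w≥0} if and only if Hom(X, Y) = 0 for all X ∈ C_{w≤−1}, and an object X belongs to C_{w≤0} if and only if Hom(X, Y) = 0 for all Y ∈ C_{w≥1}. -/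
/-!
The inclusions "⊆" are the orthogonality axiom, up to shifting morphisms by `1`.

For the inclusion `^⊥(C_{w≥1}) ⊆ C_{w≤0}`, take a weight decomposition `A → X → B → A[1]`:
the morphism `X → B` vanishes since `B ∈ C_{w≥1}`, hence `X` is a retract of `A ∈ C_{w≤0}`.
Dually, if `Y ∈ (C_{w≤-1})^⊥`, take a weight decomposition `A → Y[1] → B → A[1]` of `Y[1]`:
the morphism `A → Y[1]` vanishes since `A[-1] ∈ C_{w≤-1}`, hence `Y[1]` is a retract of `B`,
and `Y` is a retract of `B[-1] ∈ C_{w≥0}`. The two splittings are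
`isRetract_of_mor₂_eq_zero` and `isRetract_of_mor₁_eq_zero`.
-/

open CategoryTheory CategoryTheory.Limits CategoryTheory.Pretriangulated

namespace CWH

variable (C : Type*) [Category C] [HasZeroObject C] [HasShift C ℤ]
  [Preadditive C] [∀ n : ℤ, (shiftFunctor C n).Additive] [Pretriangulated C]

variable {C}

/-- The shift functor is faithful, so vanishing of `f` can be tested on `f⟦1⟧`. -/
lemma eq_zero_of_shift_map_eq_zero {D : Type*} [Category D] [HasShift D ℤ] [Preadditive D]
    [∀ n : ℤ, (shiftFunctor D n).Additive] {X Y : D} (f : X ⟶ Y)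
    (hf : (shiftFunctor D (1 : ℤ)).map f = 0) : f = 0 :=
  (shiftFunctor D (1 : ℤ)).map_injective (by rw [hf, Functor.map_zero])

lemma isRetract_of_iso {D : Type*} [Category D] {X Y : D} (e : X ≅ Y) : IsRetract X Y :=
  ⟨e.hom, e.inv, e.hom_inv_id⟩

/-- In a distinguished triangle with vanishing first morphism the second one is a split
monomorphism. -/
lemma isRetract_of_mor₁_eq_zero {A M B : C} {f : A ⟶ M} {g : M ⟶ B} {h : B ⟶ A⟦(1 : ℤ)⟧}
    (hT : Triangle.mk f g h ∈ (distTriang C)) (hf : f = 0) : IsRetract M B := by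
  obtain ⟨r, hr⟩ := Triangle.yoneda_exact₂ _ hT (𝟙 M)
    (show f ≫ 𝟙 M = 0 by rw [hf, zero_comp])
  exact ⟨g, r, hr.symm⟩

/-- In a distinguished triangle with vanishing second morphism the first one is a split
epimorphism. -/
lemma isRetract_of_mor₂_eq_zero {A M B : C} {f : A ⟶ M} {g : M ⟶ B} {h : B ⟶ A⟦(1 : ℤ)⟧}
    (hT : Triangle.mk f g h ∈ (distTriang C)) (hg : g = 0) : IsRetract M A := by
  obtain ⟨s, hs⟩ := Triangle.coyoneda_exact₂ _ hT (𝟙 M)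
    (show 𝟙 M ≫ g = 0 by rw [hg, comp_zero])
  exact ⟨s, f, hs.symm⟩

lemma IsRetract.trans {D : Type*} [Category D] {X Y Z : D} (h₁ : IsRetract X Y)
    (h₂ : IsRetract Y Z) : IsRetract X Z := by
  obtain ⟨i, r, hir⟩ := h₁
  obtain ⟨j, s, hjs⟩ := h₂
  exact ⟨i ≫ j, s ≫ r, by simp [reassoc_of% hjs, hir]⟩

lemma IsRetract.shift {D : Type*} [Category D] [HasShift D ℤ] {X Y : D}
    (h : IsRetract X Y) (n : ℤ) : IsRetract (X⟦n⟧) (Y⟦n⟧) := by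
  obtain ⟨i, r, hir⟩ := h
  exact ⟨(shiftFunctor D n).map i, (shiftFunctor D n).map r,
    by rw [← Functor.map_comp, hir, CategoryTheory.Functor.map_id]⟩

/-- `C_{w≥0} = (C_{w≤-1})^⊥` and `C_{w≤0} = ^⊥(C_{w≥1})`. -/
theorem statement3 (w : WeightStructure C) :
    (∀ Y : C, Y ∈ w.GE ↔ ∀ X ∈ w.le (-1), ∀ f : X ⟶ Y, f = 0) ∧
    (∀ X : C, X ∈ w.LE ↔ ∀ Y ∈ w.ge 1, ∀ f : X ⟶ Y, f = 0) := by
  refine ⟨fun Y => ⟨fun hY X hX f => ?_, fun hY => ?_⟩,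
    fun X => ⟨fun hX Y hY f => ?_, fun hX => ?_⟩⟩
  · exact eq_zero_of_shift_map_eq_zero f (w.orthogonal hX hY _)
  · obtain ⟨A, B, f, g, h, hT, hA, hB⟩ := w.decomp (Y⟦(1 : ℤ)⟧)
    have e : A⟦(-1 : ℤ)⟧⟦(1 : ℤ)⟧ ≅ A := shiftNegShift A (1 : ℤ)
    have hA' : A⟦(-1 : ℤ)⟧ ∈ w.le (-1) := w.retract_LE (isRetract_of_iso e) hA
    have hf : f = 0 := by
      -- `f` is, up to `e`, the shift of a morphism `A[-1] ⟶ Y`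
      obtain ⟨φ, hφ⟩ := (shiftFunctor C (1 : ℤ)).map_surjective (e.hom ≫ f)
      rw [hY _ hA' φ, Functor.map_zero] at hφ
      rw [← cancel_epi e.hom, ← hφ, comp_zero]
    have e' : Y ≅ Y⟦(1 : ℤ)⟧⟦(-1 : ℤ)⟧ := (shiftShiftNeg Y (1 : ℤ)).symm
    exact w.retract_GE
      ((isRetract_of_iso e').trans ((isRetract_of_mor₁_eq_zero hT hf).shift (-1))) hB
  · have e : Y⟦(-1 : ℤ)⟧⟦(1 : ℤ)⟧ ≅ Y := shiftNegShift Y (1 : ℤ)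
    have hf := w.orthogonal hX hY (f ≫ e.inv)
    rw [← cancel_mono e.inv, zero_comp]
    exact hf
  · obtain ⟨A, B, f, g, h, hT, hA, hB⟩ := w.decomp X
    exact w.retract_LE (isRetract_of_mor₂_eq_zero hT (hX B hB g)) hA

end CWH
end
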